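/- Let n ≥ 1, let 1 ≤ p, q ≤ ∞, s > 0, α > 0, and choose 1 ≤ p₁, p₂, q₁, q₂ ≤ ∞ with 1/p = 1/p₁ + 1/p₂ and 1/q = 1/q₁ + 1/q₂. Then there exists a constant C > 0, depending only on n, s, α and these indices, such that for all Schwartz functions f₁, f₂ on ℝⁿ the remainder series R(f₁,f₂) = Σ_{i,j∈ℤ, |i−j|≤1} (Δ_i f₁)(Δ_j f₂) converges in the space of tempered distributions and satisfies ‖Σ_{|i−j|≤1} (Δ_i f₁)(Δ_j f₂)‖_{Ḃ^s_{p,q}} ≤ C ‖f₁‖_{Ḃ^{s+α}_{p₁,q₁}} ‖f₂‖_{Ḃ^{-α}_{p₂,q₂}} in [0,∞]. -/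

import Mathlib

open MeasureTheory Real Complex Filter Function
open scoped ENNReal FourierTransform SchwartzMap

noncomputable section

/-- The properties of the radial smooth cutoff `χ` used to build the
Littlewood–Paley decomposition: smooth, compactly supported, radial,
`0 ≤ χ ≤ 1`, `χ = 1` on `{‖ξ‖ ≤ 3/4}` and `χ = 0` on `{‖ξ‖ > 4/3}`. -/
def IsLPCutoff {n : ℕ} (χ : EuclideanSpace ℝ (Fin n) → ℝ) : Prop :=
  ContDiff ℝ ((⊤ : ℕ∞) : WithTop ℕ∞) χ ∧ HasCompactSupport χ ∧
    (∀ ξ η, ‖ξ‖ = ‖η‖ → χ ξ = χ η) ∧ (∀ ξ, 0 ≤ χ ξ) ∧ (∀ ξ, χ ξ ≤ 1) ∧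
    (∀ ξ, ‖ξ‖ ≤ 3 / 4 → χ ξ = 1) ∧ (∀ ξ, 4 / 3 < ‖ξ‖ → χ ξ = 0)

/-- The low-frequency Littlewood–Paley projection `S_j f = 𝓕⁻¹(χ(·/2^j) 𝓕 f)`. -/
def Sproj {n : ℕ} (χ : EuclideanSpace ℝ (Fin n) → ℝ) (j : ℤ)
    (f : EuclideanSpace ℝ (Fin n) → ℂ) : EuclideanSpace ℝ (Fin n) → ℂ :=
  𝓕⁻ fun ξ => ((χ ((2 : ℝ) ^ (-j) • ξ) : ℝ) : ℂ) * 𝓕 f ξ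

/-- The Littlewood–Paley block `Δ_j f = 𝓕⁻¹(φ̂(·/2^j) 𝓕 f)`, where
`φ̂(ξ) = χ(ξ/2) - χ(ξ)`, i.e. `φ̂(ξ/2^j) = χ(ξ/2^(j+1)) - χ(ξ/2^j)`. -/
def Dproj {n : ℕ} (χ : EuclideanSpace ℝ (Fin n) → ℝ) (j : ℤ)
    (f : EuclideanSpace ℝ (Fin n) → ℂ) : EuclideanSpace ℝ (Fin n) → ℂ :=
  𝓕⁻ fun ξ => ((χ ((2 : ℝ) ^ (-(j + 1)) • ξ) - χ ((2 : ℝ) ^ (-j) • ξ) : ℝ) : ℂ) * 𝓕 f ξ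

/-- The `ℓ^q(ℤ)` norm of a sequence of extended nonnegative reals, with the usual
supremum modification for `q = ∞`. -/
def lqNorm (q : ℝ≥0∞) (a : ℤ → ℝ≥0∞) : ℝ≥0∞ :=
  if q = ∞ then ⨆ j, a j else (∑' j, a j ^ q.toReal) ^ (1 / q.toReal)

/-- The homogeneous Besov norm `‖f‖_{Ḃ^s_{p,q}}`, valued in `[0,∞]`. -/
def besovNorm {n : ℕ} (χ : EuclideanSpace ℝ (Fin n) → ℝ) (s : ℝ) (p q : ℝ≥0∞)
    (f : EuclideanSpace ℝ (Fin n) → ℂ) : ℝ≥0∞ :=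
  lqNorm q fun j => (2 : ℝ≥0∞) ^ ((j : ℝ) * s) * eLpNorm (Dproj χ j f) p volume

/-!
The symbols `φ̂(·/2^j)` overlap boundedly, so `Σ_j ‖Δ_j f‖_∞ ≤ 3 ‖f̂‖_1` for a Schwartz function
`f`; together with `‖Δ_j f‖_r ≤ ‖φ‖_1 ‖f‖_r` (Young) this makes the remainder series absolutely
convergent in every `L^r`, so `Δ_k` may be applied to it term by term. For `|i - j| ≤ 1` the
product `(Δ_i f₁)(Δ_j f₂)` has frequencies at most `8 · 2^i`, while `Δ_k` only sees those above
`(3/4) 2^k`, hence only the terms with `i ≥ k - 3` contribute. Writing `i = k + m` and `j = i + l`,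
Hölder's inequality bounds `2^{ks} ‖Δ_k R(f₁,f₂)‖_p` by the sum over `m ≥ -3` and `|l| ≤ 1` of
`2^{-ms} 2^{lα}` times translates of the two weighted sequences. Minkowski's and Hölder's
inequalities in `ℓ^q` then conclude, because `Σ_{m ≥ -3} 2^{-ms}` converges for `s > 0`.
-/

open scoped Convolution

/-! ### Minkowski, Hölder and Young inequalities -/

section Minkowski

variable {ι X : Type*} [Countable ι] [MeasurableSpace X] {μ : Measure X}

lemma lintegral_tsum_rpow_eq_iSup {r : ℝ} (hr : 0 < r) {F : ι → X → ℝ≥0∞}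
    (hF : ∀ i, AEMeasurable (F i) μ) :
    ∫⁻ x, (∑' i, F i x) ^ r ∂μ = ⨆ t : Finset ι, ∫⁻ x, (∑ i ∈ t, F i x) ^ r ∂μ := by
  have hsup (x : X) : (∑' i, F i x) ^ r = ⨆ t : Finset ι, (∑ i ∈ t, F i x) ^ r := by
    rw [ENNReal.tsum_eq_iSup_sum]
    exact (ENNReal.orderIsoRpow r hr).map_iSup _
  simp_rw [hsup]
  refine lintegral_iSup_directed
    (fun t => (Finset.aemeasurable_fun_sum t fun i _ => hF i).pow_const r)
    (Monotone.directed_le fun t u htu x => ?_)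
  exact ENNReal.rpow_le_rpow (Finset.sum_le_sum_of_subset htu) hr.le

variable {ε : Type*} [TopologicalSpace ε] [ESeminormedAddCommMonoid ε] {p : ℝ≥0∞}
  {F : ι → X → ε}

lemma eLpNorm_tsum_enorm_le (hp : 1 ≤ p) (hF : ∀ i, AEStronglyMeasurable (F i) μ) :
    eLpNorm (fun x => ∑' i, ‖F i x‖ₑ) p μ ≤ ∑' i, eLpNorm (F i) p μ := by
  rcases eq_or_ne p ∞ with rfl | hp_top
  · simp only [eLpNorm_exponent_top]
    refine essSup_le_of_ae_le _ ?_
    filter_upwards [ae_all_iff.2 fun i => ae_le_eLpNormEssSup (f := F i)] with x hx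
    exact ENNReal.tsum_le_tsum hx
  have hp0 : p ≠ 0 := (zero_lt_one.trans_le hp).ne'
  have hpr : 0 < p.toReal := ENNReal.toReal_pos hp0 hp_top
  rw [eLpNorm_eq_lintegral_rpow_enorm_toReal hp0 hp_top, one_div, ENNReal.rpow_inv_le_iff hpr]
  simp only [enorm_eq_self]
  rw [lintegral_tsum_rpow_eq_iSup hpr fun i => (hF i).enorm]
  refine iSup_le fun t => ?_
  rw [← ENNReal.rpow_inv_le_iff hpr, ← one_div]
  have hfin := eLpNorm_sum_le (s := t) (fun i _ => (hF i).enorm.aestronglyMeasurable) hp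
  rw [eLpNorm_eq_lintegral_rpow_enorm_toReal hp0 hp_top] at hfin
  simp only [Finset.sum_apply, enorm_eq_self, eLpNorm_enorm] at hfin
  exact hfin.trans (ENNReal.sum_le_tsum t)

lemma eLpNorm_tsum_le (hp : 1 ≤ p) (hF : ∀ i, AEStronglyMeasurable (F i) μ) :
    eLpNorm (fun x => ∑' i, F i x) p μ ≤ ∑' i, eLpNorm (F i) p μ :=
  (eLpNorm_mono_enorm fun _ => enorm_tsum_le_tsum_enorm).trans (eLpNorm_tsum_enorm_le hp hF)

end Minkowski

section Holder

variable {X : Type*} [MeasurableSpace X] {μ : Measure X} {p q r : ℝ≥0∞} {f g : X → ℝ≥0∞}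

lemma eLpNorm_mul_le_eLpNorm_top_mul_eLpNorm (hg : AEStronglyMeasurable g μ) :
    eLpNorm (fun x => f x * g x) p μ ≤ eLpNorm f ∞ μ * eLpNorm g p μ := by
  rw [eLpNorm_exponent_top]
  refine eLpNorm_le_mul_eLpNorm_of_ae_le_mul'' p hg ?_
  filter_upwards [ae_le_eLpNormEssSup (f := f) (μ := μ)] with x hx
  exact mul_le_mul_left hx _

lemma eLpNorm_mul_le_eLpNorm_mul_eLpNorm [hpqr : ENNReal.HolderTriple p q r]
    (hf : AEMeasurable f μ) (hg : AEMeasurable g μ) :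
    eLpNorm (fun x => f x * g x) r μ ≤ eLpNorm f p μ * eLpNorm g q μ := by
  rcases eq_or_ne r 0 with rfl | hr0
  · simp
  have hr_pos : 0 < r := pos_iff_ne_zero.2 hr0
  have hp0 : p ≠ 0 := (hr_pos.trans_le (ENNReal.HolderTriple.le p q r)).ne'
  have hq0 : q ≠ 0 := (hr_pos.trans_le (ENNReal.HolderTriple.le q p r)).ne'
  rcases eq_or_ne p ∞ with rfl | hp_top
  · obtain rfl : q = r := by simpa using hpqr.inv_eq.symm
    exact eLpNorm_mul_le_eLpNorm_top_mul_eLpNorm hg.aestronglyMeasurable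
  rcases eq_or_ne q ∞ with rfl | hq_top
  · obtain rfl : p = r := by simpa using hpqr.inv_eq.symm
    simpa only [mul_comm] using
      eLpNorm_mul_le_eLpNorm_top_mul_eLpNorm (f := g) hf.aestronglyMeasurable
  have hpr := ENNReal.toReal_pos hp0 hp_top
  have hqr := ENNReal.toReal_pos hq0 hq_top
  have h := ENNReal.HolderTriple.toReal r hpr hqr
  have hr_top : r ≠ ∞ := fun h' => h.pos'.ne' (by simp [h'])
  simpa only [eLpNorm_eq_lintegral_rpow_enorm_toReal hr0 hr_top,
    eLpNorm_eq_lintegral_rpow_enorm_toReal hp0 hp_top,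
    eLpNorm_eq_lintegral_rpow_enorm_toReal hq0 hq_top, enorm_eq_self, Pi.mul_apply] using
    ENNReal.lintegral_Lp_mul_le_Lq_mul_Lr h.pos' h.lt h.one_div_eq μ hf hg

end Holder

section Young

variable {G : Type*} [MeasurableSpace G] {μ : Measure G} {f g : G → ℝ≥0∞}

lemma lintegral_mul_rpow_le {r : ℝ} (hr : 1 ≤ r) (hf : AEMeasurable f μ)
    (hg : AEMeasurable g μ) :
    (∫⁻ x, f x * g x ∂μ) ^ r ≤ (∫⁻ x, f x ∂μ) ^ (r - 1) * ∫⁻ x, f x * g x ^ r ∂μ := by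
  have hr0 : 0 < r := zero_lt_one.trans_le hr
  have hfg (x : G) : f x ^ (1 - r⁻¹) * (f x * g x ^ r) ^ r⁻¹ = f x * g x := by
    rw [ENNReal.mul_rpow_of_nonneg _ _ (by positivity), ENNReal.rpow_rpow_inv hr0.ne', ← mul_assoc,
      ← ENNReal.rpow_add_of_nonneg _ _ (by simpa using inv_le_one_of_one_le₀ hr) (by positivity),
      sub_add_cancel, ENNReal.rpow_one]
  have h := ENNReal.lintegral_mul_norm_pow_le hf (hf.mul (hg.pow_const r))
    (sub_nonneg.2 (inv_le_one_of_one_le₀ hr)) (inv_nonneg.2 hr0.le) (sub_add_cancel 1 r⁻¹)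
  simp only [Pi.mul_apply, hfg] at h
  refine (ENNReal.rpow_le_rpow h hr0.le).trans_eq ?_
  rw [ENNReal.mul_rpow_of_nonneg _ _ hr0.le, ENNReal.rpow_inv_rpow hr0.ne', ← ENNReal.rpow_mul,
    sub_mul, one_mul, inv_mul_cancel₀ hr0.ne']

variable [AddGroup G] [MeasurableAdd₂ G] [MeasurableNeg G] [SFinite μ] [μ.IsAddLeftInvariant]

lemma lintegral_lconvolution (hf : AEMeasurable f μ) (hg : AEMeasurable g μ) :
    ∫⁻ x, (f ⋆ₗ[μ] g) x ∂μ = (∫⁻ x, f x ∂μ) * ∫⁻ x, g x ∂μ := by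
  simp only [lconvolution_def]
  rw [lintegral_lintegral_swap (by fun_prop), ← lintegral_mul_const'' _ hf]
  refine lintegral_congr fun y => ?_
  have hgy : AEMeasurable (fun x => g (-y + x)) μ :=
    hg.comp_quasiMeasurePreserving (measurePreserving_add_left μ (-y)).quasiMeasurePreserving
  rw [lintegral_const_mul'' _ hgy, lintegral_add_left_eq_self]

lemma lconvolution_rpow_le {r : ℝ} (hr : 1 ≤ r) (hf : AEMeasurable f μ) (hg : AEMeasurable g μ)
    (x : G) :
    (f ⋆ₗ[μ] g) x ^ r ≤ (∫⁻ y, f y ∂μ) ^ (r - 1) * (f ⋆ₗ[μ] fun y => g y ^ r) x :=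
  lintegral_mul_rpow_le hr hf (by fun_prop)

lemma eLpNorm_lconvolution_le {p : ℝ≥0∞} (hp : 1 ≤ p) (hf : AEMeasurable f μ)
    (hg : AEMeasurable g μ) :
    eLpNorm (f ⋆ₗ[μ] g) p μ ≤ (∫⁻ x, f x ∂μ) * eLpNorm g p μ := by
  rcases eq_or_ne p ∞ with rfl | hp_top
  · rw [eLpNorm_exponent_top, eLpNorm_exponent_top]
    refine essSup_le_of_ae_le _ (.of_forall fun x => ?_)
    simp only [enorm_eq_self, lconvolution_def]
    rw [← lintegral_mul_const'' _ hf]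
    refine lintegral_mono_ae ?_
    have hqmp : Measure.QuasiMeasurePreserving (fun y => -y + x) μ μ := by
      simpa [comp_def] using (quasiMeasurePreserving_neg μ).comp
        (measurePreserving_add_left μ (-x)).quasiMeasurePreserving
    filter_upwards [hqmp.ae (ae_le_eLpNormEssSup (f := g))] with y hy
    exact mul_le_mul_right hy _
  have hp0 : p ≠ 0 := (zero_lt_one.trans_le hp).ne'
  have hpr : 1 ≤ p.toReal := ENNReal.toReal_mono hp_top hp
  have hpr0 : 0 < p.toReal := zero_lt_one.trans_le hpr
  simp only [eLpNorm_eq_lintegral_rpow_enorm_toReal hp0 hp_top, enorm_eq_self, one_div]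
  rw [ENNReal.rpow_inv_le_iff hpr0, ENNReal.mul_rpow_of_nonneg _ _ hpr0.le,
    ENNReal.rpow_inv_rpow hpr0.ne']
  calc ∫⁻ x, (f ⋆ₗ[μ] g) x ^ p.toReal ∂μ
      ≤ ∫⁻ x, (∫⁻ y, f y ∂μ) ^ (p.toReal - 1) * (f ⋆ₗ[μ] fun y => g y ^ p.toReal) x ∂μ :=
        lintegral_mono (lconvolution_rpow_le hpr hf hg)
    _ = (∫⁻ y, f y ∂μ) ^ (p.toReal - 1) * ((∫⁻ y, f y ∂μ) * ∫⁻ y, g y ^ p.toReal ∂μ) := by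
        rw [lintegral_const_mul'' _ (by fun_prop),
          lintegral_lconvolution hf (hg.pow_const _)]
    _ = (∫⁻ y, f y ∂μ) ^ p.toReal * ∫⁻ y, g y ^ p.toReal ∂μ := by
        rw [← mul_assoc]
        congr 1
        nth_rw 2 [← ENNReal.rpow_one (∫⁻ y, f y ∂μ)]
        rw [← ENNReal.rpow_add_of_nonneg _ _ (sub_nonneg.2 hpr) zero_le_one, sub_add_cancel]

end Young

section Convolution

variable {𝕜 G E E' F : Type*} [NontriviallyNormedField 𝕜] [NormedAddCommGroup E]
  [NormedAddCommGroup E'] [NormedAddCommGroup F] [NormedSpace 𝕜 E] [NormedSpace 𝕜 E']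
  [NormedSpace 𝕜 F] [NormedSpace ℝ F] [MeasurableSpace G] [AddCommGroup G] {μ : Measure G}

lemma enorm_convolution_le (L : E →L[𝕜] E' →L[𝕜] F) (f : G → E) (g : G → E') (x : G) :
    ‖(f ⋆[L, μ] g) x‖ₑ ≤ ((fun y => ‖L‖ₑ * ‖f y‖ₑ) ⋆ₗ[μ] fun y => ‖g y‖ₑ) x := by
  refine (enorm_integral_le_lintegral_enorm _).trans (lintegral_mono fun y => ?_)
  rw [neg_add_eq_sub]
  exact L.le_opENorm₂ (f y) (g (x - y))

lemma eLpNorm_convolution_le [MeasurableAdd₂ G] [MeasurableNeg G] [SFinite μ]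
    [μ.IsAddLeftInvariant] (L : E →L[𝕜] E' →L[𝕜] F) {f : G → E} {g : G → E'} {p : ℝ≥0∞}
    (hp : 1 ≤ p) (hf : AEStronglyMeasurable f μ) (hg : AEStronglyMeasurable g μ) :
    eLpNorm (f ⋆[L, μ] g) p μ ≤ ‖L‖ₑ * eLpNorm f 1 μ * eLpNorm g p μ :=
  calc eLpNorm (f ⋆[L, μ] g) p μ
      ≤ eLpNorm ((fun y => ‖L‖ₑ * ‖f y‖ₑ) ⋆ₗ[μ] fun y => ‖g y‖ₑ) p μ :=
        eLpNorm_mono_enorm (enorm_convolution_le L f g)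
    _ ≤ (∫⁻ y, ‖L‖ₑ * ‖f y‖ₑ ∂μ) * eLpNorm (fun y => ‖g y‖ₑ) p μ :=
        eLpNorm_lconvolution_le hp (hf.enorm.const_mul _) hg.enorm
    _ = ‖L‖ₑ * eLpNorm f 1 μ * eLpNorm g p μ := by
        rw [lintegral_const_mul'' _ hf.enorm, eLpNorm_one_eq_lintegral_enorm, eLpNorm_enorm]

end Convolution

lemma summable_integral_smul_of_tsum_eLpNorm_top_ne_top {ι X 𝕜 E : Type*} [MeasurableSpace X]
    {μ : Measure X} [NormedField 𝕜] [NormedAddCommGroup E] [NormedSpace 𝕜 E] [NormedSpace ℝ E]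
    [CompleteSpace E] {f : ι → X → 𝕜} {g : X → E} (hf : ∀ i, AEStronglyMeasurable (f i) μ)
    (h : ∑' i, eLpNorm (f i) ∞ μ ≠ ∞) (hg : Integrable g μ) :
    Summable fun i => ∫ x, f i x • g x ∂μ := by
  refine .of_norm (tsum_enorm_ne_top_iff_summable_norm.1 ?_)
  refine ne_top_of_le_ne_top
    (ENNReal.mul_ne_top h (memLp_one_iff_integrable.2 hg).eLpNorm_ne_top) ?_
  rw [← ENNReal.tsum_mul_right]
  refine ENNReal.tsum_le_tsum fun i => (enorm_integral_le_lintegral_enorm _).trans ?_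
  rw [← eLpNorm_one_eq_lintegral_enorm]
  exact eLpNorm_smul_le_mul_eLpNorm hg.1 (hf i)

section SupNorm

variable {ι X ε E : Type*} [TopologicalSpace X] [MeasurableSpace X] {μ : Measure X}
  [TopologicalSpace ε] [ContinuousENorm ε] [NormedAddCommGroup E] [CompleteSpace E]

lemma enorm_le_eLpNorm_top_of_continuous [μ.IsOpenPosMeasure]
    {f : X → ε} (hf : Continuous f) (x : X) : ‖f x‖ₑ ≤ eLpNorm f ∞ μ := by
  have hclosed : IsClosed {x | ‖f x‖ₑ ≤ eLpNorm f ∞ μ} := isClosed_le hf.enorm continuous_const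
  have hae : {x | ‖f x‖ₑ ≤ eLpNorm f ∞ μ} =ᵐ[μ] Set.univ :=
    eventuallyEq_univ.2 (ae_le_eLpNormEssSup (f := f))
  exact Set.eq_univ_iff_forall.1 (hclosed.ae_eq_univ_iff_eq.1 hae) x

lemma summable_of_tsum_eLpNorm_top_ne_top [μ.IsOpenPosMeasure]
    {f : ι → X → E} (hf : ∀ i, Continuous (f i)) (h : ∑' i, eLpNorm (f i) ∞ μ ≠ ∞) (x : X) :
    Summable fun i => f i x :=
  .of_norm <| tsum_enorm_ne_top_iff_summable_norm.1 <| ne_top_of_le_ne_top h <|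
    ENNReal.tsum_le_tsum fun i => enorm_le_eLpNorm_top_of_continuous (hf i) x

end SupNorm

/-! ### Fourier multipliers -/

section FourierMultiplier

variable {V E : Type*} [NormedAddCommGroup V] [InnerProductSpace ℝ V] [FiniteDimensional ℝ V]
  [MeasurableSpace V] [BorelSpace V] [NormedAddCommGroup E] [NormedSpace ℂ E]

lemma enorm_fourier_le_eLpNorm_one (f : V → E) (ξ : V) : ‖𝓕 f ξ‖ₑ ≤ eLpNorm f 1 volume := by
  rw [Real.fourier_eq, eLpNorm_one_eq_lintegral_enorm]
  refine (enorm_integral_le_lintegral_enorm _).trans_eq ?_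
  simp only [← ofReal_norm, Circle.norm_smul]

lemma eLpNorm_fourier_top_le_eLpNorm_one (f : V → E) :
    eLpNorm (𝓕 f) ∞ volume ≤ eLpNorm f 1 volume :=
  essSup_le_of_ae_le _ (.of_forall (enorm_fourier_le_eLpNorm_one f))

lemma eLpNorm_fourierInv_top_le_eLpNorm_one (f : V → E) :
    eLpNorm (𝓕⁻ f) ∞ volume ≤ eLpNorm f 1 volume :=
  essSup_le_of_ae_le _ (.of_forall fun x => by
    simpa only [Real.fourierInv_eq_fourier_neg] using enorm_fourier_le_eLpNorm_one f (-x))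

lemma continuous_fourier_of_integrable {f : V → E} (hf : Integrable f) : Continuous (𝓕 f) :=
  VectorFourier.fourierIntegral_continuous Real.continuous_fourierChar
    (L := innerₗ V) continuous_inner hf

lemma continuous_fourierInv_of_integrable {f : V → E} (hf : Integrable f) :
    Continuous (𝓕⁻ f) := by
  rw [funext (Real.fourierInv_eq_fourier_neg f)]
  exact (continuous_fourier_of_integrable hf).comp continuous_neg

lemma fourier_tsum {ι : Type*} [Countable ι] {f : ι → V → E} (hf : ∀ i, Integrable (f i))
    (h : ∑' i, eLpNorm (f i) 1 volume ≠ ∞) (ξ : V) :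
    𝓕 (fun x => ∑' i, f i x) ξ = ∑' i, 𝓕 (f i) ξ := by
  simp only [Real.fourier_eq, Circle.smul_def]
  rw [← integral_tsum]
  · simp only [tsum_const_smul'']
  · exact fun i => ((Real.fourierIntegral_convergent_iff ξ).2 (hf i)).1
  · simpa only [eLpNorm_one_eq_lintegral_enorm, ← ofReal_norm, Circle.norm_smul,
      ← Circle.smul_def] using h

lemma fourierInv_tsum {ι : Type*} [Countable ι] {f : ι → V → E} (hf : ∀ i, Integrable (f i))
    (h : ∑' i, eLpNorm (f i) 1 volume ≠ ∞) (x : V) :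
    𝓕⁻ (fun ξ => ∑' i, f i ξ) x = ∑' i, 𝓕⁻ (f i) x := by
  simpa only [Real.fourierInv_eq_fourier_neg] using fourier_tsum hf h (-x)

/-- The Fourier multiplier operator `g ↦ 𝓕⁻(m 𝓕 g)` with symbol `m`. -/
def fourierMultiplier (m : V → ℂ) (g : V → E) : V → E := 𝓕⁻ fun ξ => m ξ • 𝓕 g ξ

lemma fourierMultiplier_eq_convolution [CompleteSpace E] {m : V → ℂ} {g : V → E} (hm : Integrable m)
    (hg : Integrable g) :
    fourierMultiplier m g = 𝓕⁻ m ⋆[ContinuousLinearMap.lsmul ℂ ℂ, volume] g := by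
  ext x
  have hInt : Integrable fun ξ => 𝐞 (inner ℝ ξ x) • m ξ := by
    simpa using (Real.fourierIntegral_convergent_iff (-x)).2 hm
  have hker (y : V) : VectorFourier.fourierIntegral 𝐞 volume (innerₗ V)
      (fun ξ => 𝐞 (inner ℝ ξ x) • m ξ) y = 𝓕⁻ m (x - y) := by
    simp only [Real.fourierInv_eq, VectorFourier.fourierIntegral, innerₗ_apply_apply, smul_smul,
      inner_sub_right, ← AddChar.map_add_eq_mul, neg_add_eq_sub]
  have h := VectorFourier.integral_fourierIntegral_smul_eq_flip (L := innerₗ V)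
    Real.continuous_fourierChar continuous_inner hInt hg
  simp only [hker, flip_innerₗ, smul_assoc] at h
  rw [convolution_eq_swap]
  simp only [ContinuousLinearMap.lsmul_apply]
  rw [h, fourierMultiplier, Real.fourierInv_eq]
  rfl

lemma eLpNorm_fourierMultiplier_le [CompleteSpace E] {p : ℝ≥0∞} (hp : 1 ≤ p) {m : V → ℂ} {g : V → E}
    (hm : Integrable m) (hg : Integrable g) :
    eLpNorm (fourierMultiplier m g) p volume
      ≤ eLpNorm (𝓕⁻ m) 1 volume * eLpNorm g p volume := by
  have hL : ‖(ContinuousLinearMap.lsmul ℂ ℂ : ℂ →L[ℂ] E →L[ℂ] E)‖ₑ ≤ 1 := by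
    rw [← ofReal_norm]
    exact ENNReal.ofReal_le_one.2 ContinuousLinearMap.opNorm_lsmul_le
  rw [fourierMultiplier_eq_convolution hm hg]
  refine (eLpNorm_convolution_le _ hp
    (continuous_fourierInv_of_integrable hm).aestronglyMeasurable hg.1).trans ?_
  gcongr
  exact mul_le_of_le_one_left' hL

lemma eLpNorm_smul_fourier_one_le {m : V → ℂ} {g : V → E} (hm : Integrable m)
    (hg : Integrable g) :
    eLpNorm (fun ξ => m ξ • 𝓕 g ξ) 1 volume ≤ eLpNorm m 1 volume * eLpNorm g 1 volume :=
  (eLpNorm_smul_le_mul_eLpNorm (p := 1) (q := ∞)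
    (continuous_fourier_of_integrable hg).aestronglyMeasurable hm.1).trans <| by
      gcongr
      exact eLpNorm_fourier_top_le_eLpNorm_one g

lemma fourierMultiplier_tsum {ι : Type*} [Countable ι] {m : V → ℂ} {f : ι → V → E}
    (hm : Integrable m) (hf : ∀ i, Integrable (f i)) (h : ∑' i, eLpNorm (f i) 1 volume ≠ ∞) :
    fourierMultiplier m (fun x => ∑' i, f i x) = fun x => ∑' i, fourierMultiplier m (f i) x := by
  ext x
  have hm1 : eLpNorm m 1 volume ≠ ∞ := (memLp_one_iff_integrable.2 hm).eLpNorm_ne_top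
  have hmf (i : ι) := eLpNorm_smul_fourier_one_le hm (hf i)
  simp only [fourierMultiplier, fourier_tsum hf h, ← tsum_const_smul'']
  refine fourierInv_tsum (fun i => ?_) ?_ x
  · exact memLp_one_iff_integrable.1
      ⟨hm.1.smul (continuous_fourier_of_integrable (hf i)).aestronglyMeasurable,
        (hmf i).trans_lt <| ENNReal.mul_lt_top hm1.lt_top
          (memLp_one_iff_integrable.2 (hf i)).eLpNorm_lt_top⟩
  · refine ne_top_of_le_ne_top ?_ (ENNReal.tsum_le_tsum hmf)
    rw [ENNReal.tsum_mul_left]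
    exact ENNReal.mul_ne_top hm1 h

lemma fourierInv_comp_smul (f : V → E) {c : ℝ} (hc : c ≠ 0) (x : V) :
    𝓕⁻ (fun ξ => f (c • ξ)) x
      = |(c ^ Module.finrank ℝ V)⁻¹| • 𝓕⁻ f (c⁻¹ • x) := by
  simp only [Real.fourierInv_eq, ← Measure.integral_comp_smul, inner_smul_left,
    inner_smul_right]
  simp [hc]

lemma eLpNorm_one_fourierInv_comp_smul (f : V → E) {c : ℝ} (hc : c ≠ 0) :
    eLpNorm (𝓕⁻ fun ξ => f (c • ξ)) 1 volume = eLpNorm (𝓕⁻ f) 1 volume := by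
  let e : V ≃ᵐ V := (Homeomorph.smulOfNeZero c⁻¹ (inv_ne_zero hc)).toMeasurableEquiv
  have hmap : Measure.map e volume
      = ENNReal.ofReal |c ^ Module.finrank ℝ V| • (volume : Measure V) := by
    rw [← inv_inv (c ^ _), ← inv_pow]
    exact Measure.map_addHaar_smul volume (inv_ne_zero hc)
  have hlint : ∫⁻ x, ‖𝓕⁻ f (c⁻¹ • x)‖ₑ
      = ENNReal.ofReal |c ^ Module.finrank ℝ V| * ∫⁻ x, ‖𝓕⁻ f x‖ₑ := by
    rw [← smul_eq_mul, ← lintegral_smul_measure, ← hmap]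
    exact (lintegral_map_equiv (fun x => ‖𝓕⁻ f x‖ₑ) e).symm
  simp only [eLpNorm_one_eq_lintegral_enorm, fourierInv_comp_smul f hc, enorm_smul]
  rw [lintegral_const_mul' _ _ enorm_ne_top, hlint, ← mul_assoc, ← Real.enorm_eq_ofReal_abs,
    Real.enorm_abs, ← enorm_mul, inv_mul_cancel₀ (pow_ne_zero _ hc), enorm_one, one_mul]

open scoped Pointwise in
lemma support_fourier_pairing_subset {F G H : Type*} [NormedAddCommGroup F] [NormedSpace ℂ F]
    [NormedAddCommGroup G] [NormedSpace ℂ G] [NormedAddCommGroup H] [NormedSpace ℂ H]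
    [CompleteSpace F] [CompleteSpace G] [CompleteSpace H]
    (B : F →L[ℂ] G →L[ℂ] H) (f : 𝓢(V, F)) (g : 𝓢(V, G)) :
    support (𝓕 ⇑(SchwartzMap.pairing B f g)) ⊆ support (𝓕 ⇑f) + support (𝓕 ⇑g) := by
  intro ξ hξ
  have hconv : 𝓕 ⇑(SchwartzMap.pairing B f g) ξ
      = (⇑(𝓕⁻ f : 𝓢(V, F)) ⋆[B] ⇑(𝓕⁻ g : 𝓢(V, G))) (-ξ) := by
    rw [← SchwartzMap.convolution_apply, ← FourierTransform.fourierInv_fourier_eq (F := 𝓢(V, H))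
        (SchwartzMap.convolution B _ _), SchwartzMap.fourier_convolution,
      FourierTransform.fourier_fourierInv_eq, FourierTransform.fourier_fourierInv_eq,
      SchwartzMap.fourierInv_coe, Real.fourierInv_eq_fourier_neg, neg_neg]
  rw [mem_support, hconv, ← mem_support] at hξ
  obtain ⟨x, hx, y, hy, hxy⟩ := support_convolution_subset _ hξ
  simp only [SchwartzMap.fourierInv_coe, mem_support, Real.fourierInv_eq_fourier_neg] at hx hy
  exact ⟨_, hx, _, hy, by simp only [← neg_add, hxy, neg_neg]⟩

lemma fourierMultiplier_eq_zero_of_disjoint_support {m : V → ℂ} {g : V → E}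
    (h : Disjoint (support m) (support (𝓕 g))) : fourierMultiplier m g = 0 := by
  have hzero : (fun ξ => m ξ • 𝓕 g ξ) = 0 := by
    rw [← support_eq_empty_iff]
    exact (support_smul m (𝓕 g)).trans (Set.disjoint_iff_inter_eq_empty.1 h)
  ext x
  simp [fourierMultiplier, hzero, Real.fourierInv_eq]

lemma coe_fourierMultiplierCLM {m : V → ℂ} (hm : m.HasTemperateGrowth)
    (g : 𝓢(V, E)) : ⇑(SchwartzMap.fourierMultiplierCLM E m g) = fourierMultiplier m g := by
  rw [SchwartzMap.fourierMultiplierCLM_apply, SchwartzMap.fourierInv_coe]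
  simp only [fourierMultiplier, SchwartzMap.smulLeftCLM_apply hm, SchwartzMap.fourier_coe]

lemma fourier_coe_fourierMultiplierCLM [CompleteSpace E] {m : V → ℂ} (hm : m.HasTemperateGrowth)
    (g : 𝓢(V, E)) : 𝓕 ⇑(SchwartzMap.fourierMultiplierCLM E m g) = fun ξ => m ξ • 𝓕 g ξ := by
  rw [SchwartzMap.fourierMultiplierCLM_apply, ← SchwartzMap.fourier_coe,
    FourierTransform.fourier_fourierInv_eq]
  simp only [SchwartzMap.smulLeftCLM_apply hm]

end FourierMultiplier

/-! ### Littlewood–Paley blocks -/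

section LittlewoodPaley

variable {n : ℕ} {χ : EuclideanSpace ℝ (Fin n) → ℝ}

/-- The Fourier symbol `φ̂(·/2^k)` of the Littlewood–Paley block `Δ_k`. -/
def lpSymbol (χ : EuclideanSpace ℝ (Fin n) → ℝ) (k : ℤ) (ξ : EuclideanSpace ℝ (Fin n)) : ℂ :=
  ((χ ((2 : ℝ) ^ (-(k + 1)) • ξ) - χ ((2 : ℝ) ^ (-k) • ξ) : ℝ) : ℂ)

/-- The Littlewood–Paley block `Δ_k` as an operator on Schwartz functions. It agrees with
`Dproj χ k` when `χ` is a cutoff, see `IsLPCutoff.coe_lpBlock`. -/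
def lpBlock (χ : EuclideanSpace ℝ (Fin n) → ℝ) (k : ℤ) :
    𝓢(EuclideanSpace ℝ (Fin n), ℂ) →L[ℂ] 𝓢(EuclideanSpace ℝ (Fin n), ℂ) :=
  SchwartzMap.fourierMultiplierCLM ℂ (lpSymbol χ k)

lemma Dproj_eq_fourierMultiplier (χ : EuclideanSpace ℝ (Fin n) → ℝ) (k : ℤ) :
    Dproj χ k = fourierMultiplier (lpSymbol χ k) :=
  rfl

lemma lpSymbol_eq_lpSymbol_zero_smul (χ : EuclideanSpace ℝ (Fin n) → ℝ) (k : ℤ) :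
    lpSymbol χ k = fun ξ => lpSymbol χ 0 ((2 : ℝ) ^ (-k) • ξ) := by
  ext ξ
  simp only [lpSymbol, smul_smul, ← zpow_add₀ (two_ne_zero' ℝ)]
  congr 6 <;> ring_nf

lemma norm_two_zpow_neg_smul {V : Type*} [NormedAddCommGroup V] [NormedSpace ℝ V] (k : ℤ)
    (v : V) : ‖(2 : ℝ) ^ (-k) • v‖ = ‖v‖ / 2 ^ k := by
  rw [norm_smul, norm_zpow, Real.norm_ofNat, zpow_neg, div_eq_inv_mul]

namespace IsLPCutoff

lemma support_lpSymbol_subset (hχ : IsLPCutoff χ) (k : ℤ) :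
    support (lpSymbol χ k) ⊆ {ξ | ‖ξ‖ ∈ Set.Ioc (3 / 4 * 2 ^ k) (8 / 3 * 2 ^ k)} := by
  obtain ⟨-, -, -, -, -, hone, hzero⟩ := hχ
  have hk : (0 : ℝ) < 2 ^ k := by positivity
  have hsucc : (2 : ℝ) ^ (k + 1) = 2 ^ k * 2 := zpow_add_one₀ two_ne_zero k
  intro ξ hξ
  contrapose! hξ
  rw [notMem_support, lpSymbol, ofReal_eq_zero, sub_eq_zero]
  rw [Set.mem_ofPred_eq, Set.mem_Ioc, not_and_or, not_lt, not_le] at hξ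
  rcases hξ with hlow | hhigh
  · rw [hone, hone] <;> rw [norm_two_zpow_neg_smul, div_le_iff₀ (by positivity)] <;> linarith
  · rw [hzero, hzero] <;> rw [norm_two_zpow_neg_smul, lt_div_iff₀ (by positivity)] <;> linarith

lemma norm_lpSymbol_le_one (hχ : IsLPCutoff χ) (k : ℤ) (ξ : EuclideanSpace ℝ (Fin n)) :
    ‖lpSymbol χ k ξ‖ ≤ 1 := by
  obtain ⟨-, -, -, hnonneg, hle, -, -⟩ := hχ
  rw [lpSymbol, Complex.norm_real, Real.norm_eq_abs]
  exact abs_sub_le_of_nonneg_of_le (hnonneg _) (hle _) (hnonneg _) (hle _)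

lemma contDiff_lpSymbol (hχ : IsLPCutoff χ) (k : ℤ) :
    ContDiff ℝ ((⊤ : ℕ∞) : WithTop ℕ∞) (lpSymbol χ k) :=
  ofRealCLM.contDiff.comp <|
    (hχ.1.comp (contDiff_const_smul _)).sub (hχ.1.comp (contDiff_const_smul _))

lemma hasCompactSupport_lpSymbol (hχ : IsLPCutoff χ) (k : ℤ) :
    HasCompactSupport (lpSymbol χ k) :=
  .of_support_subset_isCompact (isCompact_closedBall 0 (8 / 3 * 2 ^ k))
    fun _ hξ => mem_closedBall_zero_iff.2 (hχ.support_lpSymbol_subset k hξ).2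

lemma hasTemperateGrowth_lpSymbol (hχ : IsLPCutoff χ) (k : ℤ) :
    (lpSymbol χ k).HasTemperateGrowth :=
  (hχ.hasCompactSupport_lpSymbol k).hasTemperateGrowth (hχ.contDiff_lpSymbol k)

lemma integrable_lpSymbol (hχ : IsLPCutoff χ) (k : ℤ) : Integrable (lpSymbol χ k) :=
  (hχ.contDiff_lpSymbol k).continuous.integrable_of_hasCompactSupport
    (hχ.hasCompactSupport_lpSymbol k)

lemma coe_lpBlock (hχ : IsLPCutoff χ) (k : ℤ) (f : 𝓢(EuclideanSpace ℝ (Fin n), ℂ)) :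
    ⇑(lpBlock χ k f) = Dproj χ k f := by
  rw [lpBlock, Dproj_eq_fourierMultiplier,
    coe_fourierMultiplierCLM (hχ.hasTemperateGrowth_lpSymbol k)]

lemma support_fourier_lpBlock_subset (hχ : IsLPCutoff χ) (k : ℤ)
    (f : 𝓢(EuclideanSpace ℝ (Fin n), ℂ)) :
    support (𝓕 ⇑(lpBlock χ k f)) ⊆ support (lpSymbol χ k) := by
  rw [lpBlock, fourier_coe_fourierMultiplierCLM (hχ.hasTemperateGrowth_lpSymbol k)]
  exact support_smul_subset_left (lpSymbol χ k) (𝓕 ⇑f)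

lemma eLpNorm_fourierInv_lpSymbol_zero_ne_top (hχ : IsLPCutoff χ) :
    eLpNorm (𝓕⁻ (lpSymbol χ 0)) 1 volume ≠ ∞ := by
  let m := (hχ.hasCompactSupport_lpSymbol 0).toSchwartzMap (hχ.contDiff_lpSymbol 0)
  have hm : ⇑(𝓕⁻ m : 𝓢(EuclideanSpace ℝ (Fin n), ℂ)) = 𝓕⁻ (lpSymbol χ 0) :=
    SchwartzMap.fourierInv_coe m
  rw [← hm]
  exact (SchwartzMap.memLp _ 1 volume).eLpNorm_ne_top

lemma eLpNorm_Dproj_le (hχ : IsLPCutoff χ) (k : ℤ) {p : ℝ≥0∞} (hp : 1 ≤ p)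
    {g : EuclideanSpace ℝ (Fin n) → ℂ} (hg : Integrable g) :
    eLpNorm (Dproj χ k g) p volume
      ≤ eLpNorm (𝓕⁻ (lpSymbol χ 0)) 1 volume * eLpNorm g p volume := by
  rw [Dproj_eq_fourierMultiplier,
    ← eLpNorm_one_fourierInv_comp_smul (lpSymbol χ 0) (zpow_ne_zero (-k) two_ne_zero),
    ← lpSymbol_eq_lpSymbol_zero_smul]
  exact eLpNorm_fourierMultiplier_le hp (hχ.integrable_lpSymbol k) hg

lemma tsum_enorm_lpSymbol_le (hχ : IsLPCutoff χ) (ξ : EuclideanSpace ℝ (Fin n)) :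
    ∑' k, ‖lpSymbol χ k ξ‖ₑ ≤ 3 := by
  rcases eq_or_ne ξ 0 with rfl | hξ
  · have hzero (k : ℤ) : lpSymbol χ k 0 = 0 := by simp [lpSymbol]
    simp [hzero]
  obtain ⟨m, hm, hm'⟩ := exists_mem_Ico_zpow (norm_pos_iff.2 hξ) one_lt_two
  have hsupp : support (fun k => ‖lpSymbol χ k ξ‖ₑ) ⊆ Finset.Icc (m - 1) (m + 1) := by
    intro k hk
    obtain ⟨hlow, hhigh⟩ := hχ.support_lpSymbol_subset k (enorm_ne_zero.1 hk)
    have hle : (2 : ℝ) ^ k < 2 ^ (m + 2) := by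
      rw [show m + 2 = m + 1 + 1 by ring, zpow_add_one₀ two_ne_zero (m + 1)]
      linarith
    have hge : (2 : ℝ) ^ m < 2 ^ (k + 2) := by
      rw [zpow_add₀ two_ne_zero]
      norm_num
      linarith [zpow_pos (two_pos : (0 : ℝ) < 2) k]
    rw [zpow_lt_zpow_iff_right₀ one_lt_two] at hle hge
    rw [Finset.coe_Icc, Set.mem_Icc]
    omega
  calc ∑' k, ‖lpSymbol χ k ξ‖ₑ
      = ∑ k ∈ Finset.Icc (m - 1) (m + 1), ‖lpSymbol χ k ξ‖ₑ := tsum_eq_sum' hsupp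
    _ ≤ ∑ k ∈ Finset.Icc (m - 1) (m + 1), 1 := by
        gcongr with k
        rw [← ofReal_norm]
        exact ENNReal.ofReal_le_one.2 (hχ.norm_lpSymbol_le_one k ξ)
    _ = 3 := by simp [show m + 1 + 1 - (m - 1) = 3 by ring]

lemma tsum_eLpNorm_top_Dproj_ne_top (hχ : IsLPCutoff χ)
    (f : 𝓢(EuclideanSpace ℝ (Fin n), ℂ)) :
    ∑' k, eLpNorm (Dproj χ k f) ∞ volume ≠ ∞ := by
  have hcont (k : ℤ) : Continuous fun ξ => lpSymbol χ k ξ • 𝓕 ⇑f ξ :=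
    (hχ.contDiff_lpSymbol k).continuous.smul (continuous_fourier_of_integrable f.integrable)
  have hbound : ∑' k, eLpNorm (Dproj χ k f) ∞ volume ≤ 3 * eLpNorm (𝓕 ⇑f) 1 volume := by
    calc ∑' k, eLpNorm (Dproj χ k f) ∞ volume
        ≤ ∑' k, ∫⁻ ξ, ‖lpSymbol χ k ξ • 𝓕 ⇑f ξ‖ₑ := ENNReal.tsum_le_tsum fun k => by
          rw [← eLpNorm_one_eq_lintegral_enorm]
          exact eLpNorm_fourierInv_top_le_eLpNorm_one _
      _ = ∫⁻ ξ, (∑' k, ‖lpSymbol χ k ξ‖ₑ) * ‖𝓕 ⇑f ξ‖ₑ := by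
          rw [← lintegral_tsum fun k => (hcont k).enorm.aemeasurable]
          simp only [enorm_smul, ENNReal.tsum_mul_right]
      _ ≤ ∫⁻ ξ, 3 * ‖𝓕 ⇑f ξ‖ₑ := by
          gcongr with ξ
          exact hχ.tsum_enorm_lpSymbol_le ξ
      _ = 3 * eLpNorm (𝓕 ⇑f) 1 volume := by
          rw [lintegral_const_mul' _ _ ENNReal.ofNat_ne_top, eLpNorm_one_eq_lintegral_enorm]
  refine ne_top_of_le_ne_top (ENNReal.mul_ne_top ENNReal.ofNat_ne_top ?_) hbound
  rw [← SchwartzMap.fourier_coe]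
  exact (SchwartzMap.memLp _ 1 volume).eLpNorm_ne_top

end IsLPCutoff

end LittlewoodPaley

/-! ### The remainder series -/

section Remainder

variable {n : ℕ} {χ : EuclideanSpace ℝ (Fin n) → ℝ}

/-- The summand `(Δ_i f₁)(Δ_j f₂)` of the remainder series as a Schwartz function, extended
by zero off the band `|i - j| ≤ 1`. -/
def remainderTerm (χ : EuclideanSpace ℝ (Fin n) → ℝ)
    (f₁ f₂ : 𝓢(EuclideanSpace ℝ (Fin n), ℂ)) (ij : ℤ × ℤ) : 𝓢(EuclideanSpace ℝ (Fin n), ℂ) :=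
  if |ij.1 - ij.2| ≤ 1 then
    SchwartzMap.pairing (ContinuousLinearMap.mul ℂ ℂ) (lpBlock χ ij.1 f₁) (lpBlock χ ij.2 f₂)
  else 0

lemma tsum_ite_abs_sub_le_one (i : ℤ) (c : ℝ≥0∞) :
    ∑' j : ℤ, (if |i - j| ≤ 1 then c else 0) = 3 * c := by
  have hmem (j : ℤ) : |i - j| ≤ 1 ↔ j ∈ Finset.Icc (i - 1) (i + 1) := by
    rw [abs_le, Finset.mem_Icc]
    omega
  simp only [hmem]
  rw [tsum_eq_sum fun j hj => if_neg hj, Finset.sum_ite_mem, Finset.inter_self, Finset.sum_const,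
    Int.card_Icc, show i + 1 + 1 - (i - 1) = 3 by ring]
  simp

namespace IsLPCutoff

lemma remainderTerm_apply (hχ : IsLPCutoff χ) (f₁ f₂ : 𝓢(EuclideanSpace ℝ (Fin n), ℂ))
    (ij : ℤ × ℤ) (x : EuclideanSpace ℝ (Fin n)) :
    remainderTerm χ f₁ f₂ ij x
      = if |ij.1 - ij.2| ≤ 1 then Dproj χ ij.1 f₁ x * Dproj χ ij.2 f₂ x else 0 := by
  rw [remainderTerm]
  split_ifs
  · rw [SchwartzMap.pairing_apply_apply, hχ.coe_lpBlock, hχ.coe_lpBlock,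
      ContinuousLinearMap.mul_apply']
  · rfl

lemma eLpNorm_remainderTerm_le (hχ : IsLPCutoff χ) {p₁ p₂ r : ℝ≥0∞}
    [ENNReal.HolderTriple p₁ p₂ r] (f₁ f₂ : 𝓢(EuclideanSpace ℝ (Fin n), ℂ)) (ij : ℤ × ℤ) :
    eLpNorm (remainderTerm χ f₁ f₂ ij) r volume ≤ if |ij.1 - ij.2| ≤ 1 then
      eLpNorm (Dproj χ ij.1 f₁) p₁ volume * eLpNorm (Dproj χ ij.2 f₂) p₂ volume else 0 := by
  rw [remainderTerm]
  split_ifs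
  · have hmul : ⇑(SchwartzMap.pairing (ContinuousLinearMap.mul ℂ ℂ) (lpBlock χ ij.1 f₁)
        (lpBlock χ ij.2 f₂)) = ⇑(lpBlock χ ij.1 f₁) • ⇑(lpBlock χ ij.2 f₂) := rfl
    rw [hmul, ← hχ.coe_lpBlock, ← hχ.coe_lpBlock]
    exact eLpNorm_smul_le_mul_eLpNorm (lpBlock χ ij.2 f₂).continuous.aestronglyMeasurable
      (lpBlock χ ij.1 f₁).continuous.aestronglyMeasurable
  · exact eLpNorm_zero.le

lemma tsum_eLpNorm_remainderTerm_ne_top (hχ : IsLPCutoff χ) {r : ℝ≥0∞} (hr : 1 ≤ r)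
    (f₁ f₂ : 𝓢(EuclideanSpace ℝ (Fin n), ℂ)) :
    ∑' ij, eLpNorm (remainderTerm χ f₁ f₂ ij) r volume ≠ ∞ := by
  set A := eLpNorm (𝓕⁻ (lpSymbol χ 0)) 1 volume
  have hbound (i j : ℤ) : eLpNorm (remainderTerm χ f₁ f₂ (i, j)) r volume
      ≤ if |i - j| ≤ 1 then eLpNorm (Dproj χ i f₁) ∞ volume * (A * eLpNorm f₂ r volume)
        else 0 := by
    refine (hχ.eLpNorm_remainderTerm_le (p₁ := ∞) (p₂ := r) f₁ f₂ (i, j)).trans ?_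
    split_ifs
    · gcongr
      exact hχ.eLpNorm_Dproj_le j hr f₂.integrable
    · exact le_rfl
  rw [ENNReal.tsum_prod (f := fun i j => eLpNorm (remainderTerm χ f₁ f₂ (i, j)) r volume)]
  refine ne_top_of_le_ne_top ?_
    (ENNReal.tsum_le_tsum fun i => ENNReal.tsum_le_tsum fun j => hbound i j)
  simp only [tsum_ite_abs_sub_le_one, ENNReal.tsum_mul_left, ENNReal.tsum_mul_right]
  exact ENNReal.mul_ne_top ENNReal.ofNat_ne_top <|
    ENNReal.mul_ne_top (hχ.tsum_eLpNorm_top_Dproj_ne_top f₁) <|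
      ENNReal.mul_ne_top hχ.eLpNorm_fourierInv_lpSymbol_zero_ne_top
        (f₂.memLp r volume).eLpNorm_ne_top

lemma Dproj_lpBlock_mul_lpBlock_eq_zero (hχ : IsLPCutoff χ) {i j k : ℤ} (hij : |i - j| ≤ 1)
    (hk : i + 3 < k) (f₁ f₂ : 𝓢(EuclideanSpace ℝ (Fin n), ℂ)) :
    Dproj χ k (SchwartzMap.pairing (ContinuousLinearMap.mul ℂ ℂ)
      (lpBlock χ i f₁) (lpBlock χ j f₂)) = 0 := by
  rw [Dproj_eq_fourierMultiplier]
  refine fourierMultiplier_eq_zero_of_disjoint_support (Set.disjoint_left.2 fun ξ hξ hξ' => ?_)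
  obtain ⟨η, hη, ζ, hζ, rfl⟩ := support_fourier_pairing_subset _ _ _ hξ'
  have hlow := (hχ.support_lpSymbol_subset k hξ).1
  have hi := (hχ.support_lpSymbol_subset i (hχ.support_fourier_lpBlock_subset i f₁ hη)).2
  have hj := (hχ.support_lpSymbol_subset j (hχ.support_fourier_lpBlock_subset j f₂ hζ)).2
  have hji : (2 : ℝ) ^ j ≤ 2 ^ (i + 1) :=
    zpow_le_zpow_right₀ one_le_two (by rw [abs_le] at hij; omega)
  have hik : (2 : ℝ) ^ (i + 4) ≤ 2 ^ k := zpow_le_zpow_right₀ one_le_two (by omega)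
  rw [zpow_add₀ two_ne_zero] at hji hik
  norm_num at hji hik
  linarith [norm_add_le η ζ, zpow_pos (two_pos : (0 : ℝ) < 2) i]

lemma eLpNorm_Dproj_remainderTerm_le (hχ : IsLPCutoff χ) {p p₁ p₂ : ℝ≥0∞}
    [ENNReal.HolderTriple p₁ p₂ p] (hp : 1 ≤ p) (k : ℤ)
    (f₁ f₂ : 𝓢(EuclideanSpace ℝ (Fin n), ℂ)) (ij : ℤ × ℤ) :
    eLpNorm (Dproj χ k (remainderTerm χ f₁ f₂ ij)) p volume
      ≤ eLpNorm (𝓕⁻ (lpSymbol χ 0)) 1 volume * if |ij.1 - ij.2| ≤ 1 ∧ k ≤ ij.1 + 3 then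
        eLpNorm (Dproj χ ij.1 f₁) p₁ volume * eLpNorm (Dproj χ ij.2 f₂) p₂ volume else 0 := by
  by_cases hfar : |ij.1 - ij.2| ≤ 1 ∧ ij.1 + 3 < k
  · rw [remainderTerm, if_pos hfar.1, hχ.Dproj_lpBlock_mul_lpBlock_eq_zero hfar.1 hfar.2,
      eLpNorm_zero]
    exact zero_le
  · refine (hχ.eLpNorm_Dproj_le k hp (SchwartzMap.integrable _)).trans ?_
    gcongr
    refine (hχ.eLpNorm_remainderTerm_le (p₁ := p₁) (p₂ := p₂) f₁ f₂ ij).trans_eq ?_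
    exact if_congr (by grind) rfl rfl

lemma eLpNorm_Dproj_tsum_remainderTerm_le (hχ : IsLPCutoff χ) {p p₁ p₂ : ℝ≥0∞}
    [ENNReal.HolderTriple p₁ p₂ p] (hp : 1 ≤ p) (k : ℤ)
    (f₁ f₂ : 𝓢(EuclideanSpace ℝ (Fin n), ℂ)) :
    eLpNorm (Dproj χ k fun x => ∑' ij, remainderTerm χ f₁ f₂ ij x) p volume
      ≤ eLpNorm (𝓕⁻ (lpSymbol χ 0)) 1 volume *
        ∑' ij : ℤ × ℤ, if |ij.1 - ij.2| ≤ 1 ∧ k ≤ ij.1 + 3 then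
          eLpNorm (Dproj χ ij.1 f₁) p₁ volume * eLpNorm (Dproj χ ij.2 f₂) p₂ volume else 0 := by
  have hcomm : Dproj χ k (fun x => ∑' ij, remainderTerm χ f₁ f₂ ij x)
      = fun x => ∑' ij, Dproj χ k (remainderTerm χ f₁ f₂ ij) x := by
    rw [Dproj_eq_fourierMultiplier]
    exact fourierMultiplier_tsum (hχ.integrable_lpSymbol k) (fun _ => SchwartzMap.integrable _)
      (hχ.tsum_eLpNorm_remainderTerm_ne_top le_rfl f₁ f₂)
  rw [hcomm, ← ENNReal.tsum_mul_left]
  refine (eLpNorm_tsum_le hp fun ij => ?_).trans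
    (ENNReal.tsum_le_tsum fun ij => hχ.eLpNorm_Dproj_remainderTerm_le hp k f₁ f₂ ij)
  rw [← hχ.coe_lpBlock]
  exact (SchwartzMap.continuous _).aestronglyMeasurable

end IsLPCutoff

end Remainder

/-! ### The discrete estimate -/

section Discrete

lemma lqNorm_eq_eLpNorm_count {q : ℝ≥0∞} (hq : q ≠ 0) (a : ℤ → ℝ≥0∞) :
    lqNorm q a = eLpNorm a q Measure.count := by
  rw [lqNorm]
  split_ifs with hq_top
  · rw [hq_top, eLpNorm_exponent_top, eLpNormEssSup_count]
    simp only [enorm_eq_self]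
  · rw [eLpNorm_eq_lintegral_rpow_enorm_toReal hq hq_top, lintegral_count]
    simp only [enorm_eq_self]

lemma lqNorm_le_mul_lqNorm {q : ℝ≥0∞} (hq : q ≠ 0) {a b : ℤ → ℝ≥0∞} {c : ℝ≥0∞}
    (h : ∀ k, a k ≤ c * b k) : lqNorm q a ≤ c * lqNorm q b := by
  rw [lqNorm_eq_eLpNorm_count hq, lqNorm_eq_eLpNorm_count hq]
  exact eLpNorm_le_mul_eLpNorm_of_ae_le_mul'' q .of_discrete (.of_forall h)

lemma eLpNorm_tsum_mul_comp_le {ι X : Type*} [Countable ι] [MeasurableSpace X] {μ : Measure X}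
    {q q₁ q₂ : ℝ≥0∞} [ENNReal.HolderTriple q₁ q₂ q] (hq : 1 ≤ q) {x y : X → ℝ≥0∞}
    (hx : AEMeasurable x μ) (hy : AEMeasurable y μ) {S T : ι → X → X}
    (hS : ∀ i, MeasurePreserving (S i) μ μ) (hT : ∀ i, MeasurePreserving (T i) μ μ)
    (w : ι → ℝ≥0∞) :
    eLpNorm (fun k => ∑' i, w i * (x (S i k) * y (T i k))) q μ
      ≤ (∑' i, w i) * (eLpNorm x q₁ μ * eLpNorm y q₂ μ) := by
  have hxS (i : ι) : AEMeasurable (x ∘ S i) μ :=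
    hx.comp_quasiMeasurePreserving (hS i).quasiMeasurePreserving
  have hyT (i : ι) : AEMeasurable (y ∘ T i) μ :=
    hy.comp_quasiMeasurePreserving (hT i).quasiMeasurePreserving
  rw [← ENNReal.tsum_mul_right]
  refine (eLpNorm_tsum_le hq fun i =>
    (((hxS i).mul (hyT i)).const_mul (w i)).aestronglyMeasurable).trans
      (ENNReal.tsum_le_tsum fun i => ?_)
  calc eLpNorm (fun k => w i * (x (S i k) * y (T i k))) q μ
      ≤ w i * eLpNorm (fun k => x (S i k) * y (T i k)) q μ :=
        eLpNorm_le_mul_eLpNorm_of_ae_le_mul'' q ((hxS i).mul (hyT i)).aestronglyMeasurable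
          (.of_forall fun _ => le_rfl)
    _ ≤ w i * (eLpNorm (x ∘ S i) q₁ μ * eLpNorm (y ∘ T i) q₂ μ) := by
        gcongr
        exact eLpNorm_mul_le_eLpNorm_mul_eLpNorm (hxS i) (hyT i)
    _ = w i * (eLpNorm x q₁ μ * eLpNorm y q₂ μ) := by
        rw [eLpNorm_comp_measurePreserving hx.aestronglyMeasurable (hS i),
          eLpNorm_comp_measurePreserving hy.aestronglyMeasurable (hT i)]

/-- The factor `2^{-ms}` by which the output at frequency `2^k` is damped when the inputs live at
frequency `2^{k+m}`; it vanishes for `m < -3`, where there is no interaction. -/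
def offsetWeight (s : ℝ) (m : ℤ) : ℝ≥0∞ :=
  if -3 ≤ m then 2 ^ (-(m : ℝ) * s) else 0

/-- The factor `2^{lα}` lost by comparing the frequencies `2^i` and `2^{i+l}` of the two inputs;
it vanishes off the band `|l| ≤ 1`. -/
def bandWeight (α : ℝ) (l : ℤ) : ℝ≥0∞ :=
  if |l| ≤ 1 then 2 ^ ((l : ℝ) * α) else 0

lemma tsum_offsetWeight_ne_top {s : ℝ} (hs : 0 < s) : ∑' m, offsetWeight s m ≠ ∞ := by
  have hshift : Injective fun k : ℕ => (k : ℤ) - 3 := fun _ _ h => by simpa using h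
  have hterm (k : ℕ) : offsetWeight s ((k : ℤ) - 3) = 2 ^ (3 * s) * (2 ^ (-s)) ^ k := by
    rw [offsetWeight, if_pos (by omega), ← ENNReal.rpow_natCast, ← ENNReal.rpow_mul,
      ← ENNReal.rpow_add _ _ two_ne_zero ENNReal.ofNat_ne_top]
    congr 1
    push_cast
    ring
  rw [← hshift.tsum_eq]
  · simp only [hterm]
    rw [ENNReal.tsum_mul_left, ENNReal.tsum_geometric]
    refine ENNReal.mul_ne_top (ENNReal.rpow_ne_top_of_nonneg (by positivity)
      ENNReal.ofNat_ne_top) ?_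
    rw [ENNReal.inv_ne_top, Ne, tsub_eq_zero_iff_le, not_le]
    exact ENNReal.rpow_lt_one_of_one_lt_of_neg ENNReal.one_lt_two (by linarith)
  · intro m hm
    have hm' : -3 ≤ m := by_contra fun h => hm (if_neg h)
    exact ⟨(m + 3).toNat, by dsimp only; omega⟩

lemma tsum_bandWeight_ne_top (α : ℝ) : ∑' l, bandWeight α l ≠ ∞ := by
  have hoff (l : ℤ) (hl : l ∉ Finset.Icc (-1) 1) : bandWeight α l = 0 :=
    if_neg (by rwa [Finset.mem_Icc, ← abs_le] at hl)
  rw [tsum_eq_sum hoff]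
  refine ENNReal.sum_ne_top.2 fun l _ => ?_
  rw [bandWeight]
  split_ifs
  · exact ENNReal.rpow_ne_top_of_ne_zero two_ne_zero ENNReal.ofNat_ne_top
  · exact ENNReal.zero_ne_top

lemma two_rpow_mul_ite_eq_weights_mul (s α : ℝ) (a b : ℤ → ℝ≥0∞) (k m l : ℤ) :
    2 ^ ((k : ℝ) * s) * (if |m + k - (l + (m + k))| ≤ 1 ∧ k ≤ m + k + 3 then
        a (m + k) * b (l + (m + k)) else 0)
      = offsetWeight s m * bandWeight α l *
        (2 ^ (((m + k : ℤ) : ℝ) * (s + α)) * a (m + k) *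
          (2 ^ (((l + (m + k) : ℤ) : ℝ) * (-α)) * b (l + (m + k)))) := by
  have hcond : (|m + k - (l + (m + k))| ≤ 1 ∧ k ≤ m + k + 3) ↔ -3 ≤ m ∧ |l| ≤ 1 := by grind
  have hexp : (2 : ℝ≥0∞) ^ ((k : ℝ) * s) = 2 ^ (-(m : ℝ) * s) * 2 ^ ((l : ℝ) * α) *
      (2 ^ (((m + k : ℤ) : ℝ) * (s + α)) * 2 ^ (((l + (m + k) : ℤ) : ℝ) * (-α))) := by
    simp only [← ENNReal.rpow_add _ _ (two_ne_zero' ℝ≥0∞) ENNReal.ofNat_ne_top]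
    congr 1
    push_cast
    ring
  rw [if_congr hcond rfl rfl, ite_and, offsetWeight, bandWeight, hexp]
  split_ifs <;> ring

lemma two_rpow_mul_tsum_near_diagonal_eq (s α : ℝ) (a b : ℤ → ℝ≥0∞) (k : ℤ) :
    2 ^ ((k : ℝ) * s) * ∑' ij : ℤ × ℤ,
        (if |ij.1 - ij.2| ≤ 1 ∧ k ≤ ij.1 + 3 then a ij.1 * b ij.2 else 0)
      = ∑' ml : ℤ × ℤ, offsetWeight s ml.1 * bandWeight α ml.2 *
        (2 ^ (((ml.1 + k : ℤ) : ℝ) * (s + α)) * a (ml.1 + k) *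
          (2 ^ (((ml.2 + (ml.1 + k) : ℤ) : ℝ) * (-α)) * b (ml.2 + (ml.1 + k)))) := by
  rw [ENNReal.tsum_prod', ENNReal.tsum_prod', ← (Equiv.addRight k).tsum_eq,
    ← ENNReal.tsum_mul_left]
  refine tsum_congr fun m => ?_
  rw [← (Equiv.addRight (m + k)).tsum_eq, ← ENNReal.tsum_mul_left]
  exact tsum_congr fun l => two_rpow_mul_ite_eq_weights_mul s α a b k m l

lemma lqNorm_tsum_near_diagonal_le {q q₁ q₂ : ℝ≥0∞} [ENNReal.HolderTriple q₁ q₂ q] (hq : 1 ≤ q)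
    (s α : ℝ) (a b : ℤ → ℝ≥0∞) :
    lqNorm q (fun k => 2 ^ ((k : ℝ) * s) * ∑' ij : ℤ × ℤ,
        if |ij.1 - ij.2| ≤ 1 ∧ k ≤ ij.1 + 3 then a ij.1 * b ij.2 else 0)
      ≤ (∑' m, offsetWeight s m) * (∑' l, bandWeight α l) *
        (lqNorm q₁ (fun i => 2 ^ ((i : ℝ) * (s + α)) * a i) *
          lqNorm q₂ (fun j => 2 ^ ((j : ℝ) * (-α)) * b j)) := by
  have hshift (m : ℤ) : MeasurePreserving (m + ·) (Measure.count : Measure ℤ) Measure.count :=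
    measurePreserving_add_left _ m
  have hweights : ∑' ml : ℤ × ℤ, offsetWeight s ml.1 * bandWeight α ml.2
      = (∑' m, offsetWeight s m) * ∑' l, bandWeight α l := by
    rw [ENNReal.tsum_prod', ← ENNReal.tsum_mul_right]
    simp only [ENNReal.tsum_mul_left]
  have hq_pos : 0 < q := zero_lt_one.trans_le hq
  have hq₁ : q₁ ≠ 0 := (hq_pos.trans_le (ENNReal.HolderTriple.le q₁ q₂ q)).ne'
  have hq₂ : q₂ ≠ 0 := (hq_pos.trans_le (ENNReal.HolderTriple.le q₂ q₁ q)).ne'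
  rw [← hweights, lqNorm_eq_eLpNorm_count hq_pos.ne',
    lqNorm_eq_eLpNorm_count hq₁, lqNorm_eq_eLpNorm_count hq₂]
  simp only [two_rpow_mul_tsum_near_diagonal_eq s α]
  exact eLpNorm_tsum_mul_comp_le (μ := Measure.count) hq
    (x := fun i : ℤ => 2 ^ ((i : ℝ) * (s + α)) * a i)
    (y := fun j : ℤ => 2 ^ ((j : ℝ) * (-α)) * b j) .of_discrete .of_discrete
    (S := fun ml : ℤ × ℤ => (ml.1 + ·)) (T := fun ml => (ml.2 + ·) ∘ (ml.1 + ·))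
    (fun ml => hshift ml.1) (fun ml => (hshift ml.2).comp (hshift ml.1))
    (fun ml => offsetWeight s ml.1 * bandWeight α ml.2)

end Discrete

section BesovEstimate

variable {n : ℕ} {χ : EuclideanSpace ℝ (Fin n) → ℝ}

lemma IsLPCutoff.besovNorm_tsum_remainderTerm_le (hχ : IsLPCutoff χ) (s α : ℝ)
    {p p₁ p₂ q q₁ q₂ : ℝ≥0∞} [ENNReal.HolderTriple p₁ p₂ p] [ENNReal.HolderTriple q₁ q₂ q]
    (hp : 1 ≤ p) (hq : 1 ≤ q) (f₁ f₂ : 𝓢(EuclideanSpace ℝ (Fin n), ℂ)) :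
    besovNorm χ s p q (fun x => ∑' ij, remainderTerm χ f₁ f₂ ij x)
      ≤ eLpNorm (𝓕⁻ (lpSymbol χ 0)) 1 volume *
          ((∑' m, offsetWeight s m) * ∑' l, bandWeight α l) *
        (besovNorm χ (s + α) p₁ q₁ f₁ * besovNorm χ (-α) p₂ q₂ f₂) := by
  rw [mul_assoc]
  calc besovNorm χ s p q (fun x => ∑' ij, remainderTerm χ f₁ f₂ ij x)
      ≤ eLpNorm (𝓕⁻ (lpSymbol χ 0)) 1 volume *
        lqNorm q (fun k => 2 ^ ((k : ℝ) * s) * ∑' ij : ℤ × ℤ,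
          if |ij.1 - ij.2| ≤ 1 ∧ k ≤ ij.1 + 3 then
            eLpNorm (Dproj χ ij.1 f₁) p₁ volume * eLpNorm (Dproj χ ij.2 f₂) p₂ volume
          else 0) := by
        refine lqNorm_le_mul_lqNorm (zero_lt_one.trans_le hq).ne' fun k => ?_
        rw [mul_left_comm]
        gcongr
        exact hχ.eLpNorm_Dproj_tsum_remainderTerm_le hp k f₁ f₂
    _ ≤ _ := by
        gcongr
        exact lqNorm_tsum_near_diagonal_le hq s α
          (fun i => eLpNorm (Dproj χ i f₁) p₁ volume) fun j => eLpNorm (Dproj χ j f₂) p₂ volume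

end BesovEstimate

theorem paraproduct_remainder_estimate_general
    {n : ℕ} {χ : EuclideanSpace ℝ (Fin n) → ℝ} (hχ : IsLPCutoff χ) {s : ℝ} (hs : 0 < s) (α : ℝ)
    {p q p₁ p₂ q₁ q₂ : ℝ≥0∞} (hp : 1 ≤ p) (hq : 1 ≤ q)
    (hp12 : 1 / p = 1 / p₁ + 1 / p₂) (hq12 : 1 / q = 1 / q₁ + 1 / q₂) :
    ∃ C : ℝ≥0∞, 0 < C ∧ C < ∞ ∧
      ∀ f₁ f₂ : 𝓢(EuclideanSpace ℝ (Fin n), ℂ),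
        (∀ x, Summable fun ij : ℤ × ℤ =>
          if |ij.1 - ij.2| ≤ 1 then Dproj χ ij.1 (⇑f₁) x * Dproj χ ij.2 (⇑f₂) x else 0) ∧
        (∀ g : 𝓢(EuclideanSpace ℝ (Fin n), ℂ),
          Summable fun ij : ℤ × ℤ =>
            ∫ x, (if |ij.1 - ij.2| ≤ 1 then Dproj χ ij.1 (⇑f₁) x * Dproj χ ij.2 (⇑f₂) x else 0)
              * g x) ∧
        besovNorm χ s p q (fun x => ∑' ij : ℤ × ℤ,
            if |ij.1 - ij.2| ≤ 1 then Dproj χ ij.1 (⇑f₁) x * Dproj χ ij.2 (⇑f₂) x else 0) ≤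
          C * (besovNorm χ (s + α) p₁ q₁ ⇑f₁ * besovNorm χ (-α) p₂ q₂ ⇑f₂) := by
  have : ENNReal.HolderTriple p₁ p₂ p := ⟨by simpa only [one_div] using hp12.symm⟩
  have : ENNReal.HolderTriple q₁ q₂ q := ⟨by simpa only [one_div] using hq12.symm⟩
  set A := eLpNorm (𝓕⁻ (lpSymbol χ 0)) 1 volume
  set M := ∑' m, offsetWeight s m
  set L := ∑' l, bandWeight α l
  have hC : A * (M * L) ≠ ∞ := ENNReal.mul_ne_top hχ.eLpNorm_fourierInv_lpSymbol_zero_ne_top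
    (ENNReal.mul_ne_top (tsum_offsetWeight_ne_top hs) (tsum_bandWeight_ne_top α))
  refine ⟨A * (M * L) + 1, by simp, ENNReal.add_lt_top.2 ⟨hC.lt_top, ENNReal.one_lt_top⟩,
    fun f₁ f₂ => ?_⟩
  simp only [← hχ.remainderTerm_apply]
  have htop := hχ.tsum_eLpNorm_remainderTerm_ne_top le_top f₁ f₂
  have hcont (ij : ℤ × ℤ) : Continuous (remainderTerm χ f₁ f₂ ij) := SchwartzMap.continuous _
  refine ⟨summable_of_tsum_eLpNorm_top_ne_top hcont htop, fun g => ?_, ?_⟩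
  · simpa only [smul_eq_mul] using summable_integral_smul_of_tsum_eLpNorm_top_ne_top
      (fun ij => (hcont ij).aestronglyMeasurable) htop g.integrable
  · refine (hχ.besovNorm_tsum_remainderTerm_le (p₁ := p₁) (p₂ := p₂) (q₁ := q₁) (q₂ := q₂)
      s α hp hq f₁ f₂).trans ?_
    gcongr
    exact le_self_add

/-- **Remainder estimate for Bony's decomposition**: the series
`R(f₁,f₂) = Σ_{i,j∈ℤ, |i-j|≤1} (Δ_i f₁)(Δ_j f₂)` converges in the space of tempered
distributions (pointwise, and when paired against any Schwartz test function), and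
`‖R(f₁,f₂)‖_{Ḃ^s_{p,q}} ≤ C ‖f₁‖_{Ḃ^{s+α}_{p₁,q₁}} ‖f₂‖_{Ḃ^{-α}_{p₂,q₂}}`, with a
constant `C` depending only on `n`, `χ`, `s`, `α` and the indices. -/
theorem paraproduct_remainder_estimate
    (n : ℕ) (hn : 1 ≤ n) (χ : EuclideanSpace ℝ (Fin n) → ℝ) (hχ : IsLPCutoff χ)
    (s α : ℝ) (hs : 0 < s) (hα : 0 < α)
    (p q p₁ p₂ q₁ q₂ : ℝ≥0∞)
    (hp : 1 ≤ p) (hq : 1 ≤ q) (hp₁ : 1 ≤ p₁) (hp₂ : 1 ≤ p₂) (hq₁ : 1 ≤ q₁) (hq₂ : 1 ≤ q₂)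
    (hp12 : 1 / p = 1 / p₁ + 1 / p₂) (hq12 : 1 / q = 1 / q₁ + 1 / q₂) :
    ∃ C : ℝ≥0∞, 0 < C ∧ C < ∞ ∧
      ∀ f₁ f₂ : 𝓢(EuclideanSpace ℝ (Fin n), ℂ),
        (∀ x, Summable fun ij : ℤ × ℤ =>
          if |ij.1 - ij.2| ≤ 1 then Dproj χ ij.1 (⇑f₁) x * Dproj χ ij.2 (⇑f₂) x else 0) ∧
        (∀ g : 𝓢(EuclideanSpace ℝ (Fin n), ℂ),
          Summable fun ij : ℤ × ℤ =>
            ∫ x, (if |ij.1 - ij.2| ≤ 1 then Dproj χ ij.1 (⇑f₁) x * Dproj χ ij.2 (⇑f₂) x else 0)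
              * g x) ∧
        besovNorm χ s p q (fun x => ∑' ij : ℤ × ℤ,
            if |ij.1 - ij.2| ≤ 1 then Dproj χ ij.1 (⇑f₁) x * Dproj χ ij.2 (⇑f₂) x else 0) ≤
          C * (besovNorm χ (s + α) p₁ q₁ ⇑f₁ * besovNorm χ (-α) p₂ q₂ ⇑f₂) :=
  paraproduct_remainder_estimate_general hχ hs α hp hq hp12 hq12
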